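/- arXiv:math-ph/0411052 — 4 statements merged into one kernel-verified Lean document; each statement's English description precedes it below -/
import Mathlib

section
/- Let φ ∈ ℝ with φ/π irrational, let R_φ : ℝ² → ℝ² be the rotation through angle φ about the origin, and let Γ = ℤa + ℤb where a, b is an ℝ-basis of ℝ². Then ⋂_{m∈ℤ} R_φ^m Γ = {0}; in particular any vector lying in R_φ^m Γ for every m ∈ ℤ is zero. -/
/-- The rotation of `ℝ²` through angle `θ` about the origin. -/
noncomputable def rot2 (θ : ℝ) (p : ℝ × ℝ) : ℝ × ℝ :=
  (Real.cos θ * p.1 - Real.sin θ * p.2, Real.sin θ * p.1 + Real.cos θ * p.2)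

/-!
A rotation preserves the circle on which `x` lies, and a lattice has only finitely many points on
that circle. If `x ≠ 0`, the points `R_φ^{-m} x` for `m ∈ ℤ` are pairwise distinct because `φ/π` is
irrational, so only finitely many of them belong to `Γ`, whereas `x ∈ R_φ^m Γ` for every `m`
would put all of them there.
-/

theorem rot2_neg_rot2 (θ : ℝ) (p : ℝ × ℝ) : rot2 (-θ) (rot2 θ p) = p := by
  ext <;> simp only [rot2, Real.cos_neg, Real.sin_neg]
  · linear_combination p.1 * Real.sin_sq_add_cos_sq θ
  · linear_combination p.2 * Real.sin_sq_add_cos_sq θ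

theorem rot2_fst_sq_add_snd_sq (θ : ℝ) (p : ℝ × ℝ) :
    (rot2 θ p).1 ^ 2 + (rot2 θ p).2 ^ 2 = p.1 ^ 2 + p.2 ^ 2 := by
  simp only [rot2]
  linear_combination (p.1 ^ 2 + p.2 ^ 2) * Real.sin_sq_add_cos_sq θ

theorem coe_angle_eq_of_rot2_eq {α β : ℝ} {p : ℝ × ℝ} (hp : p ≠ 0) (h : rot2 α p = rot2 β p) :
    (α : Real.Angle) = β := by
  have hp_sq : p.1 ^ 2 + p.2 ^ 2 ≠ 0 := by
    simpa [add_eq_zero_iff_of_nonneg, sq_nonneg, Prod.ext_iff] using hp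
  simp only [rot2, Prod.mk.injEq] at h
  obtain ⟨hfst, hsnd⟩ := h
  -- The inner products of `rot2 θ p` with `p` and with its quarter turn `(-p.2, p.1)` are
  -- `cos θ * ‖p‖²` and `sin θ * ‖p‖²`, in the Euclidean norm.
  apply Real.Angle.cos_sin_inj
  · apply mul_right_cancel₀ hp_sq
    linear_combination p.1 * hfst + p.2 * hsnd
  · apply mul_right_cancel₀ hp_sq
    linear_combination p.1 * hsnd - p.2 * hfst

theorem zsmul_coe_angle_injective {φ : ℝ} (hφ : Irrational (φ / Real.pi)) :
    Function.Injective fun m : ℤ ↦ m • (φ : Real.Angle) := by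
  have : Fact (0 < 2 * Real.pi) := ⟨Real.two_pi_pos⟩
  have hφ_two_pi : Irrational (φ / (2 * Real.pi)) := by
    rw [mul_comm, ← div_div]
    exact_mod_cast hφ.div_natCast two_ne_zero
  rw [injective_zsmul_iff_not_isOfFinAddOrder]
  exact AddCircle.not_isOfFinAddOrder_iff_forall_rat_ne_div.mpr fun q hq ↦ hφ_two_pi ⟨q, hq⟩

theorem rot2_int_mul_injective {φ : ℝ} (hφ : Irrational (φ / Real.pi)) {p : ℝ × ℝ} (hp : p ≠ 0) :
    Function.Injective fun m : ℤ ↦ rot2 (m * φ) p := by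
  intro m n hmn
  apply zsmul_coe_angle_injective hφ
  simpa [Real.Angle.intCast_mul_eq_zsmul] using coe_angle_eq_of_rot2_eq hp hmn

theorem finite_inter_span_int_range {ι E : Type*} [NormedAddCommGroup E] [NormedSpace ℝ E]
    [FiniteDimensional ℝ E] {v : ι → E} (hv : LinearIndependent ℝ v) {s : Set E}
    (hs : Bornology.IsBounded s) : (s ∩ Submodule.span ℤ (Set.range v)).Finite := by
  refine (ZSpan.setFinite_inter (Module.Basis.extend hv.linearIndepOn_id) hs).subset ?_
  gcongr
  simpa using hv.linearIndepOn_id.subset_extend _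

theorem finite_inter_int_combinations_pair {E : Type*} [NormedAddCommGroup E] [NormedSpace ℝ E]
    [FiniteDimensional ℝ E] {a b : E} (hab : LinearIndependent ℝ ![a, b]) {s : Set E}
    (hs : Bornology.IsBounded s) :
    (s ∩ {x | ∃ m n : ℤ, x = (m : ℝ) • a + (n : ℝ) • b}).Finite := by
  have hspan : (Submodule.span ℤ (Set.range ![a, b]) : Set E) =
      {x | ∃ m n : ℤ, x = (m : ℝ) • a + (n : ℝ) • b} := by
    ext x
    rw [Matrix.range_cons_cons_empty]
    simp only [SetLike.mem_coe, Submodule.mem_span_pair, Set.mem_ofPred_eq,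
      Int.cast_smul_eq_zsmul, eq_comm]
  exact hspan ▸ finite_inter_span_int_range hab hs

theorem isBounded_circle (r : ℝ) : Bornology.IsBounded {p : ℝ × ℝ | p.1 ^ 2 + p.2 ^ 2 = r} := by
  refine (Metric.isBounded_closedBall (x := 0) (r := √r)).subset fun p hp ↦ ?_
  have hp' : p.1 ^ 2 + p.2 ^ 2 = r := hp
  rw [mem_closedBall_zero_iff, Prod.norm_def]
  exact max_le (Real.abs_le_sqrt (by linarith [sq_nonneg p.2]))
    (Real.abs_le_sqrt (by linarith [sq_nonneg p.1]))

theorem inter_rot_lattice_eq_zero_general {φ : ℝ} (hφ : Irrational (φ / Real.pi)) {S : Set (ℝ × ℝ)}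
    (hS : ∀ r : ℝ, ({p | p.1 ^ 2 + p.2 ^ 2 = r} ∩ S).Finite) {x : ℝ × ℝ}
    (hx : {m : ℤ | x ∈ rot2 (m * φ) '' S}.Infinite) : x = 0 := by
  by_contra hx0
  have orbit_injective : Function.Injective fun m : ℤ ↦ rot2 (((-m : ℤ) : ℝ) * φ) x :=
    (rot2_int_mul_injective hφ hx0).comp neg_injective
  refine hx (((hS (x.1 ^ 2 + x.2 ^ 2)).preimage orbit_injective.injOn).subset ?_)
  rintro m ⟨y, hy, hyx⟩
  have hxy : rot2 (((-m : ℤ) : ℝ) * φ) x = y := by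
    rw [← hyx, Int.cast_neg, neg_mul, rot2_neg_rot2]
  exact ⟨rot2_fst_sq_add_snd_sq _ x, Set.mem_of_eq_of_mem hxy hy⟩

/-- If `φ/π` is irrational, `R_φ` is the rotation through `φ`, and
`Γ = ℤa + ℤb` is a lattice in `ℝ²`, then `⋂_{m∈ℤ} R_φ^m Γ = {0}`: any vector lying in
`R_φ^m Γ` (i.e. in `rot2 (m*φ) '' Γ`) for every `m ∈ ℤ` is zero. -/
theorem inter_rot_lattice_eq_zero
    (φ : ℝ) (hφ : Irrational (φ / Real.pi))
    (a b : ℝ × ℝ) (hab : LinearIndependent ℝ ![a, b])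
    (Γ : Set (ℝ × ℝ))
    (hΓ : Γ = {x | ∃ m n : ℤ, x = (m : ℝ) • a + (n : ℝ) • b})
    (x : ℝ × ℝ) (hx : ∀ m : ℤ, x ∈ rot2 (m * φ) '' Γ) :
    x = 0 := by
  subst hΓ
  exact inter_rot_lattice_eq_zero_general hφ
    (fun r ↦ finite_inter_int_combinations_pair hab (isBounded_circle r))
    (Set.eq_univ_of_forall hx ▸ Set.infinite_univ)
end

section
/- Let 0 < φ < π/2, set b₁ = cos φ and b₂ = sin φ, let Γ = ℤ(1,0) + ℤ(b₁,b₂) ⊂ ℝ², and let R_φ be the rotation of ℝ² through angle φ. If the intersection Γ ∩ R_φΓ contains a point that does not lie in ℤ(b₁,b₂), then cos φ is rational, i.e. cos φ = p/q for some integers p, q. -/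
theorem coe_span_int_pair {K V : Type*} [Ring K] [AddCommGroup V] [Module K V] (v w : V) :
    (Submodule.span ℤ {v, w} : Set V) = {x | ∃ m n : ℤ, x = (m : K) • v + (n : K) • w} := by
  ext x
  simp only [SetLike.mem_coe, Submodule.mem_span_pair, Int.cast_smul_eq_zsmul,
    Set.mem_ofPred_eq, eq_comm]

theorem exists_eq_div_of_mem_span_pair_of_notMem_span_singleton {R K V : Type*}
    [CommRing R] [Field K] [Algebra R K] [AddCommGroup V] [Module R V] [Module K V]
    [IsScalarTower R K V] {v w x : V} {t d : K}
    (hvw : LinearIndependent K ![v, w]) (hx : x ∈ Submodule.span R {v, w})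
    (hx' : x ∈ Submodule.span R {w, t • w - d • v}) (hxw : x ∉ Submodule.span R {w}) :
    ∃ p q : R, algebraMap R K q ≠ 0 ∧ t = algebraMap R K p / algebraMap R K q := by
  obtain ⟨m, n, rfl⟩ := Submodule.mem_span_pair.1 hx
  obtain ⟨k, l, hkl⟩ := Submodule.mem_span_pair.1 hx'
  obtain ⟨hv, hw⟩ : algebraMap R K m + algebraMap R K l * d = 0 ∧
      algebraMap R K n - algebraMap R K k - algebraMap R K l * t = 0 := by
    refine LinearIndependent.pair_iff.1 hvw _ _ ?_
    rw [← algebraMap_smul K k, ← algebraMap_smul K l, ← algebraMap_smul K m,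
      ← algebraMap_smul K n] at hkl
    linear_combination (norm := module) -hkl
  have hl : algebraMap R K l ≠ 0 := by
    intro hl
    have hm : algebraMap R K m = 0 := by simpa [hl] using hv
    refine hxw (Submodule.mem_span_singleton.2 ⟨n, ?_⟩)
    rw [← algebraMap_smul K m v, hm, zero_smul, zero_add]
  refine ⟨n - k, l, hl, ?_⟩
  rw [eq_div_iff hl, map_sub]
  linear_combination -hw

theorem isLinearMap_rot2 (θ : ℝ) : IsLinearMap ℝ (rot2 θ) where
  map_add p q := by ext <;> simp [rot2] <;> ring
  map_smul r p := by ext <;> simp [rot2] <;> ring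

theorem image_rot2_span_int (θ : ℝ) (s : Set (ℝ × ℝ)) :
    rot2 θ '' Submodule.span ℤ s = Submodule.span ℤ (rot2 θ '' s) :=
  congrArg SetLike.coe
    (Submodule.map_span (((isLinearMap_rot2 θ).mk' (rot2 θ)).restrictScalars ℤ) s)

theorem rot2_one_zero (θ : ℝ) : rot2 θ (1, 0) = (Real.cos θ, Real.sin θ) := by
  simp [rot2]

theorem rot2_rot2_eq (θ : ℝ) (v : ℝ × ℝ) :
    rot2 θ (rot2 θ v) = (2 * Real.cos θ) • rot2 θ v - v := by
  ext <;> simp only [rot2, Prod.fst_sub, Prod.snd_sub, Prod.smul_fst, Prod.smul_snd, smul_eq_mul]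
  · linear_combination (-v.1) * Real.sin_sq_add_cos_sq θ
  · linear_combination (-v.2) * Real.sin_sq_add_cos_sq θ

theorem linearIndependent_pair_rot2 {θ : ℝ} {v : ℝ × ℝ} (hθ : Real.sin θ ≠ 0) (hv : v ≠ 0) :
    LinearIndependent ℝ ![v, rot2 θ v] := by
  refine (LinearIndependent.pair_iff' hv).2 fun a ha => hv ?_
  obtain ⟨h₁, h₂⟩ : a * v.1 = Real.cos θ * v.1 - Real.sin θ * v.2 ∧
      a * v.2 = Real.sin θ * v.1 + Real.cos θ * v.2 := Prod.ext_iff.1 ha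
  have hnorm : v.1 * v.1 + v.2 * v.2 = 0 :=
    mul_left_cancel₀ hθ (by linear_combination v.2 * h₁ - v.1 * h₂)
  exact Prod.ext_iff.2 (mul_self_add_mul_self_eq_zero.1 hnorm)

theorem coincidence_forces_rational_cos_general {φ : ℝ} {v x : ℝ × ℝ}
    (hx : x ∈ Submodule.span ℤ {v, rot2 φ v})
    (hxR : x ∈ rot2 φ '' Submodule.span ℤ {v, rot2 φ v})
    (hxv : x ∉ Submodule.span ℤ {rot2 φ v}) :
    ∃ p q : ℤ, q ≠ 0 ∧ Real.cos φ = (p : ℝ) / (q : ℝ) := by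
  by_cases hsin : Real.sin φ = 0
  · rcases Real.sin_eq_zero_iff_cos_eq.1 hsin with hcos | hcos
    · exact ⟨1, 1, one_ne_zero, by simp [hcos]⟩
    · exact ⟨-1, 1, one_ne_zero, by simp [hcos]⟩
  have hv : v ≠ 0 := by
    rintro rfl
    exact hxv (by simpa [(isLinearMap_rot2 φ).map_zero] using hx)
  rw [image_rot2_span_int, Set.image_pair, rot2_rot2_eq] at hxR
  obtain ⟨p, q, hq, hpq⟩ := exists_eq_div_of_mem_span_pair_of_notMem_span_singleton
    (t := 2 * Real.cos φ) (d := 1)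
    (linearIndependent_pair_rot2 hsin hv) hx (by rwa [one_smul]) hxv
  simp only [algebraMap_int_eq, eq_intCast] at hq hpq
  refine ⟨p, 2 * q, mul_ne_zero two_ne_zero (Int.cast_ne_zero.1 hq), ?_⟩
  push_cast
  linear_combination hpq / 2

/-- Let `0 < φ < π/2`, `b₁ = cos φ`, `b₂ = sin φ`,
`Γ = ℤ(1,0) + ℤ(b₁,b₂)`, and let `R_φ` be the rotation through `φ`.
If `Γ ∩ R_φΓ` contains a point not lying in `ℤ(b₁,b₂)`, then `cos φ` is rational,
i.e. `cos φ = p/q` for some integers `p, q`. -/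
theorem coincidence_forces_rational_cos
    (φ : ℝ) (hφ₁ : 0 < φ) (hφ₂ : φ < Real.pi / 2)
    (b₁ b₂ : ℝ) (hb₁ : b₁ = Real.cos φ) (hb₂ : b₂ = Real.sin φ)
    (Γ : Set (ℝ × ℝ))
    (hΓ : Γ = {x | ∃ m n : ℤ, x = (m : ℝ) • ((1 : ℝ), (0 : ℝ)) + (n : ℝ) • (b₁, b₂)})
    (hx : ∃ x, x ∈ Γ ∧ x ∈ rot2 φ '' Γ ∧ ¬∃ n : ℤ, x = (n : ℝ) • (b₁, b₂)) :
    ∃ p q : ℤ, q ≠ 0 ∧ Real.cos φ = (p : ℝ) / (q : ℝ) := by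
  obtain ⟨x, hxΓ, hxR, hxb⟩ := hx
  rw [← coe_span_int_pair, hb₁, hb₂, ← rot2_one_zero] at hΓ
  subst hΓ
  refine coincidence_forces_rational_cos_general hxΓ hxR fun hxv => hxb ?_
  obtain ⟨n, rfl⟩ := Submodule.mem_span_singleton.1 hxv
  exact ⟨n, by rw [rot2_one_zero, hb₁, hb₂, Int.cast_smul_eq_zsmul]⟩
end

section
/- Let φ ∈ ℝ with φ/π irrational, let R_φ be the rotation of ℝ² through angle φ, and let Γ* be a lattice in ℝ² (the ℤ-span of an ℝ-basis). Then the closure of ⋃_{m∈ℤ} R_φ^m Γ* equals the union of the concentric circles about the origin whose radii are norms of lattice points: cl( ⋃_{m∈ℤ} R_φ^m Γ* ) = { x ∈ ℝ² : ‖x‖ = ‖k‖ for some k ∈ Γ* }. -/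
/-- Build a point of Euclidean `ℝ²` from two coordinates. -/
noncomputable def mkE2 (x y : ℝ) : EuclideanSpace ℝ (Fin 2) :=
  (WithLp.equiv 2 (Fin 2 → ℝ)).symm ![x, y]

/-- The rotation of Euclidean `ℝ²` through angle `θ` about the origin. -/
noncomputable def rotE2 (θ : ℝ) (p : EuclideanSpace ℝ (Fin 2)) : EuclideanSpace ℝ (Fin 2) :=
  mkE2 (Real.cos θ * p 0 - Real.sin θ * p 1) (Real.sin θ * p 0 + Real.cos θ * p 1)

/-!
In polar coordinates `R_θ p` is the point of radius `‖p‖` and argument `θ + arg p`, so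
`θ ↦ R_θ p` is continuous, `2π`-periodic, and runs through the whole circle of radius `‖p‖`.
Multiples of `φ` are dense modulo `2π`, hence the orbit of `p` under `R_φ` is dense in that circle.
This puts every circle through a point of `Γ*` inside the closure. Conversely, the union of these
circles is the preimage under the norm of `norm '' Γ*`, which is closed because the norm is a
closed map on `ℝ²` and a lattice is a closed set.
-/

open Metric Set

theorem range_subset_closure_range_int_mul {X : Type*} [TopologicalSpace X] {f : ℝ → X} {T a : ℝ}
    (hf : Continuous f) (hT : Function.Periodic f T) (ha : Irrational (a / T)) :
    range f ⊆ closure (range fun m : ℤ => f (m * a)) := by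
  refine (hf.range_subset_closure_image_dense (dense_addSubgroupClosure_pair_iff.mpr ha)).trans
    (closure_mono ?_)
  rintro _ ⟨t, ht, rfl⟩
  obtain ⟨m, n, rfl⟩ := AddSubgroup.mem_closure_pair.mp ht
  refine ⟨m, ?_⟩
  simp only [zsmul_eq_mul]
  exact (hT.int_mul n (m * a)).symm

theorem isClosed_setOf_exists_norm_eq {E : Type*} [SeminormedAddCommGroup E] [ProperSpace E]
    {S : Set E} (hS : IsClosed S) : IsClosed {x : E | ∃ k ∈ S, ‖x‖ = ‖k‖} := by
  have hnorm : IsClosed (norm '' S) := by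
    simpa only [dist_zero_left] using isClosedMap_dist (0 : E) S hS
  have hpreimage : {x : E | ∃ k ∈ S, ‖x‖ = ‖k‖} = norm ⁻¹' (norm '' S) := by
    ext x
    simp only [mem_ofPred_eq, mem_preimage, mem_image, eq_comm]
  exact hpreimage ▸ hnorm.preimage continuous_norm

theorem isClosed_span_int_range_of_linearIndependent {ι E : Type*} [Finite ι]
    [AddCommGroup E] [Module ℝ E] [TopologicalSpace E] [IsTopologicalAddGroup E]
    [ContinuousSMul ℝ E] [T2Space E] {v : ι → E} (hv : LinearIndependent ℝ v) :
    IsClosed (Submodule.span ℤ (range v) : Set E) := by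
  classical
  have := Fintype.ofFinite ι
  let L : (ι → ℝ) →ₗ[ℝ] E := Fintype.linearCombination ℝ v
  have hL : Topology.IsClosedEmbedding L :=
    L.isClosedEmbedding_of_injective
      (LinearMap.ker_eq_bot.mpr hv.fintypeLinearCombination_injective)
  let Λ : Submodule ℤ (ι → ℝ) := Submodule.span ℤ (range (Pi.basisFun ℝ ι))
  have hΛ : IsClosed (Λ : Set (ι → ℝ)) :=
    AddSubgroup.isClosed_of_discrete (H := Λ.toAddSubgroup)
  have hbasis : L ∘ Pi.basisFun ℝ ι = v := by
    ext i
    simp [L, Fintype.linearCombination_apply_single]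
  have himage : L '' Λ = Submodule.span ℤ (range v) := by
    have := congrArg (SetLike.coe (A := Submodule ℤ E))
      (Submodule.map_span (L.restrictScalars ℤ) (range (Pi.basisFun ℝ ι)))
    simpa [Λ, ← range_comp, hbasis] using this
  exact himage ▸ hL.isClosedMap Λ hΛ

theorem setOf_intCast_smul_add_eq_span {R E : Type*} [Ring R] [AddCommGroup E] [Module R E]
    (a b : E) :
    {x | ∃ m n : ℤ, x = (m : R) • a + (n : R) • b} = Submodule.span ℤ (range ![a, b]) := by
  ext x
  simp only [Matrix.range_cons, Matrix.range_empty, union_empty, singleton_union, mem_ofPred_eq,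
    SetLike.mem_coe, Submodule.mem_span_pair, Int.cast_smul_eq_zsmul, eq_comm]

theorem rotE2_eq_repr_circleMap (θ : ℝ) (p : EuclideanSpace ℝ (Fin 2)) :
    rotE2 θ p = Complex.orthonormalBasisOneI.repr
      (circleMap 0 ‖p‖ (θ + (Complex.orthonormalBasisOneI.repr.symm p).arg)) := by
  set z := Complex.orthonormalBasisOneI.repr.symm p
  have hp : p = Complex.orthonormalBasisOneI.repr z :=
    (Complex.orthonormalBasisOneI.repr.apply_symm_apply p).symm
  have hrot : circleMap 0 ‖p‖ (θ + z.arg) = Complex.exp (θ * Complex.I) * z := by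
    rw [hp, LinearIsometryEquiv.norm_map, circleMap_zero, Complex.ofReal_add, add_mul,
      Complex.exp_add, mul_left_comm, Complex.norm_mul_exp_arg_mul_I]
  rw [hrot, hp]
  ext i
  fin_cases i <;>
    simp [rotE2, mkE2, Complex.exp_ofReal_mul_I_re, Complex.exp_ofReal_mul_I_im, add_comm]

theorem continuous_rotE2_left (p : EuclideanSpace ℝ (Fin 2)) :
    Continuous fun θ => rotE2 θ p := by
  simp only [rotE2_eq_repr_circleMap]
  fun_prop

theorem periodic_rotE2_left (p : EuclideanSpace ℝ (Fin 2)) :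
    Function.Periodic (fun θ => rotE2 θ p) (2 * Real.pi) := fun θ => by
  simp only [rotE2, Real.cos_add_two_pi, Real.sin_add_two_pi]

theorem range_rotE2_left (p : EuclideanSpace ℝ (Fin 2)) :
    range (fun θ => rotE2 θ p) = sphere 0 ‖p‖ := by
  set e := Complex.orthonormalBasisOneI.repr
  calc range (fun θ => rotE2 θ p)
      = e '' range (circleMap 0 ‖p‖ ∘ (· + (e.symm p).arg)) := by
        simp only [rotE2_eq_repr_circleMap, ← range_comp]
        rfl
    _ = e '' sphere 0 ‖p‖ := by
        rw [(add_right_surjective _).range_comp, range_circleMap, abs_norm]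
    _ = sphere 0 ‖p‖ := by rw [e.image_sphere, map_zero]

theorem norm_rotE2 (θ : ℝ) (p : EuclideanSpace ℝ (Fin 2)) : ‖rotE2 θ p‖ = ‖p‖ :=
  mem_sphere_zero_iff_norm.mp (range_rotE2_left p ▸ mem_range_self θ)

theorem sphere_subset_closure_range_rotE2_int_mul {φ : ℝ} (hφ : Irrational (φ / Real.pi))
    (p : EuclideanSpace ℝ (Fin 2)) :
    sphere 0 ‖p‖ ⊆ closure (range fun m : ℤ => rotE2 (m * φ) p) := by
  have hφ' : Irrational (φ / (2 * Real.pi)) := by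
    rw [mul_comm, ← div_div]
    exact hφ.div_natCast two_ne_zero
  exact range_rotE2_left p ▸
    range_subset_closure_range_int_mul (continuous_rotE2_left p) (periodic_rotE2_left p) hφ'

theorem closure_rotated_lattice_eq_circles_general {φ : ℝ} (hφ : Irrational (φ / Real.pi))
    {S : Set (EuclideanSpace ℝ (Fin 2))} (hS : IsClosed S) :
    closure (⋃ m : ℤ, rotE2 (m * φ) '' S) = {x | ∃ k ∈ S, ‖x‖ = ‖k‖} := by
  refine (closure_minimal ?_ (isClosed_setOf_exists_norm_eq hS)).antisymm ?_
  · refine iUnion_subset fun m => ?_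
    rintro _ ⟨k, hk, rfl⟩
    exact ⟨k, hk, norm_rotE2 _ k⟩
  · rintro x ⟨k, hk, hxk⟩
    have horbit : range (fun m : ℤ => rotE2 (m * φ) k) ⊆ ⋃ m : ℤ, rotE2 (m * φ) '' S :=
      range_subset_iff.mpr fun m => mem_iUnion_of_mem m (mem_image_of_mem _ hk)
    exact closure_mono horbit
      (sphere_subset_closure_range_rotE2_int_mul hφ k (mem_sphere_zero_iff_norm.mpr hxk))

/-- If `φ/π` is irrational and `Γ*` is a lattice in `ℝ²`, then the
closure of `⋃_{m∈ℤ} R_φ^m Γ*` equals the union of the concentric circles about the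
origin with radii the norms of lattice points:
`cl(⋃_{m∈ℤ} R_φ^m Γ*) = {x : ‖x‖ = ‖k‖ for some k ∈ Γ*}`. -/
theorem closure_rotated_lattice_eq_circles
    (φ : ℝ) (hφ : Irrational (φ / Real.pi))
    (a b : EuclideanSpace ℝ (Fin 2)) (hab : LinearIndependent ℝ ![a, b])
    (Γstar : Set (EuclideanSpace ℝ (Fin 2)))
    (hΓstar : Γstar = {x | ∃ m n : ℤ, x = (m : ℝ) • a + (n : ℝ) • b}) :
    closure (⋃ m : ℤ, rotE2 (m * φ) '' Γstar)
      = {x | ∃ k ∈ Γstar, ‖x‖ = ‖k‖} := by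
  rw [hΓstar, setOf_intCast_smul_add_eq_span]
  exact closure_rotated_lattice_eq_circles_general hφ
    (isClosed_span_int_range_of_linearIndependent hab)
end

section
/- Let Γ be a lattice in ℝ² (the ℤ-span of an ℝ-basis), regarded as a subset of ℝ³ via the embedding (x₁,x₂) ↦ (x₁,x₂,0). Let R : ℝ³ → ℝ³ be a rotation about the axis ℝe₃ (so R fixes e₃ and preserves the plane ℝ²×{0}), let c > 0 and c₀ = (0,0,c), and let (v_k)_{k∈ℤ} be vectors in ℝ²×{0} satisfying v_{k+i} − v_k = R^k(v_i − v_0) for all k, i ∈ ℤ. Define Λ = ⋃_{k∈ℤ} ( R^k Γ + v_k + k c₀ ). Then R(Λ − Λ) = Λ − Λ. -/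
/-- The rotation of `ℝ³` through angle `θ` about the axis `ℝe₃`: it rotates the first
two coordinates by `θ` and fixes the third coordinate. -/
noncomputable def rot3 (θ : ℝ) (x : ℝ × ℝ × ℝ) : ℝ × ℝ × ℝ :=
  (Real.cos θ * x.1 - Real.sin θ * x.2.1,
   Real.sin θ * x.1 + Real.cos θ * x.2.1,
   x.2.2)

/-- The embedding `ℝ² → ℝ³`, `(x₁,x₂) ↦ (x₁,x₂,0)`. -/
def emb (p : ℝ × ℝ) : ℝ × ℝ × ℝ := (p.1, p.2, 0)

/-!
The screw motion `T x = R x + t` with `t = v₁ - R v₀ + c₀` carries the `k`-th layer of `Λ` onto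
the `(k + 1)`-st, so it maps `Λ` onto itself. Differences do not see the translation `t`, whence
`R (Λ - Λ) = T Λ - T Λ = Λ - Λ`.
-/

section DifferenceSet

open scoped Pointwise

theorem ofPred_exists_eq_sub {E : Type*} [Sub E] (s t : Set E) :
    {z | ∃ x ∈ s, ∃ y ∈ t, z = x - y} = s - t := by
  ext z
  simp only [Set.mem_ofPred_eq, Set.mem_sub, eq_comm]

theorem image_sub_self_of_image_add_eq {E F : Type*} [AddGroup E] [FunLike F E E]
    [AddMonoidHomClass F E E] (R : F) (t : E) {Λ : Set E}
    (hΛ : (fun x ↦ R x + t) '' Λ = Λ) : R '' (Λ - Λ) = Λ - Λ :=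
  calc
    R '' (Λ - Λ) = (fun x ↦ R x + t) '' Λ - (fun x ↦ R x + t) '' Λ :=
      Set.image_image2_distrib fun x y ↦ by rw [map_sub, add_sub_add_right_eq_sub]
    _ = Λ - Λ := by rw [hΛ]

end DifferenceSet

theorem image_iUnion_eq_of_image_eq_comp {α : Type*} {ι : Sort*} {f : α → α} {s : ι → Set α}
    {σ : ι → ι} (hσ : σ.Surjective) (hs : ∀ i, f '' s i = s (σ i)) :
    f '' ⋃ i, s i = ⋃ i, s i := by
  simp only [Set.image_iUnion, hs]
  exact hσ.iUnion_comp s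

section SCDSet

variable {E : Type*} [AddCommGroup E] (R : AddAut E) (Γ : Set E) (v : ℤ → E) (c₀ : E)

/-- The `k`-th layer `R^k Γ + v_k + k c₀` of an SCD set, for an arbitrary set `Γ` in an abelian
group. The group law of `AddAut E` is written additively, so `R^k` is `k • R`. -/
def scdLayer (k : ℤ) : Set E :=
  (fun γ ↦ (k • R) γ + v k + k • c₀) '' Γ

/-- The SCD set `Λ = ⋃_{k ∈ ℤ} (R^k Γ + v_k + k c₀)`. -/
def scdSet : Set E :=
  ⋃ k, scdLayer R Γ v c₀ k

variable {R v c₀}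

theorem image_scdLayer (hR : R c₀ = c₀) (hv : ∀ i, v (1 + i) - v 1 = R (v i - v 0)) (k : ℤ) :
    (fun x ↦ R x + (v 1 - R (v 0) + c₀)) '' scdLayer R Γ v c₀ k =
      scdLayer R Γ v c₀ (k + 1) := by
  rw [scdLayer, scdLayer, Set.image_image]
  refine Set.image_congr fun γ _ ↦ ?_
  have hpow : ((k + 1) • R) γ = R ((k • R) γ) := by
    rw [add_comm, one_add_zsmul, AddAut.add_apply]
  have hshift : v (k + 1) = R (v k) - R (v 0) + v 1 := by
    rw [add_comm k, ← map_sub, ← hv, sub_add_cancel]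
  rw [hpow, hshift, add_one_zsmul, map_add, map_add, map_zsmul, hR]
  abel

theorem image_scdSet (hR : R c₀ = c₀) (hv : ∀ i, v (1 + i) - v 1 = R (v i - v 0)) :
    (fun x ↦ R x + (v 1 - R (v 0) + c₀)) '' scdSet R Γ v c₀ = scdSet R Γ v c₀ :=
  image_iUnion_eq_of_image_eq_comp (Equiv.addRight (1 : ℤ)).surjective (image_scdLayer Γ hR hv)

open scoped Pointwise in
theorem scd_difference_set_rotation_invariant_general (hR : R c₀ = c₀)
    (hv : ∀ i, v (1 + i) - v 1 = R (v i - v 0)) :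
    R '' (scdSet R Γ v c₀ - scdSet R Γ v c₀) = scdSet R Γ v c₀ - scdSet R Γ v c₀ :=
  image_sub_self_of_image_add_eq R _ (image_scdSet Γ hR hv)

end SCDSet

section Rotation

theorem rot3_zero (x : ℝ × ℝ × ℝ) : rot3 0 x = x := by
  simp [rot3]

theorem rot3_rot3 (s t : ℝ) (x : ℝ × ℝ × ℝ) : rot3 s (rot3 t x) = rot3 (s + t) x := by
  simp only [rot3, Real.cos_add, Real.sin_add, Prod.mk.injEq, and_true]
  constructor <;> ring

theorem rot3_add (θ : ℝ) (x y : ℝ × ℝ × ℝ) : rot3 θ (x + y) = rot3 θ x + rot3 θ y := by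
  ext <;> simp only [rot3, Prod.fst_add, Prod.snd_add] <;> ring

theorem rot3_axis (θ c : ℝ) : rot3 θ (0, 0, c) = (0, 0, c) := by
  simp [rot3]

/-- The rotations about the axis `ℝe₃` as a one-parameter group of additive automorphisms
of `ℝ³`, under composition. -/
noncomputable def rot3Hom : ℝ →+ AddAut (ℝ × ℝ × ℝ) where
  toFun θ :=
    { toFun := rot3 θ
      invFun := rot3 (-θ)
      left_inv x := by rw [rot3_rot3, neg_add_cancel, rot3_zero]
      right_inv x := by rw [rot3_rot3, add_neg_cancel, rot3_zero]
      map_add' := rot3_add θ }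
  map_zero' := AddEquiv.ext rot3_zero
  map_add' s t := AddEquiv.ext fun x ↦ (rot3_rot3 s t x).symm

theorem rot3Hom_apply (θ : ℝ) (x : ℝ × ℝ × ℝ) : rot3Hom θ x = rot3 θ x :=
  rfl

theorem zsmul_rot3Hom_apply (k : ℤ) (θ : ℝ) (x : ℝ × ℝ × ℝ) :
    (k • rot3Hom θ) x = rot3 (k * θ) x := by
  rw [← map_zsmul, zsmul_eq_mul, rot3Hom_apply]

theorem scdSet_rot3Hom (a b : ℝ × ℝ) (v : ℤ → ℝ × ℝ × ℝ) (θ c : ℝ) :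
    scdSet (rot3Hom θ) (emb '' (Submodule.span ℤ {a, b} : Set (ℝ × ℝ))) v (0, 0, c) =
      {z | ∃ k m n : ℤ, z = rot3 (k * θ) (emb ((m : ℝ) • a + (n : ℝ) • b)) + v k +
        (k : ℝ) • ((0 : ℝ), (0 : ℝ), c)} := by
  ext z
  simp only [scdSet, scdLayer, Set.image_image, zsmul_rot3Hom_apply, Set.mem_iUnion,
    Set.mem_image, SetLike.mem_coe, Submodule.mem_span_pair, Int.cast_smul_eq_zsmul,
    Set.mem_ofPred_eq, exists_exists_exists_and_eq, @eq_comm _ z]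

end Rotation

/-- Let `Γ = ℤa + ℤb` be a planar lattice, embedded in `ℝ³` via
`(x₁,x₂) ↦ (x₁,x₂,0)`; let `R = rot3 θ` be a rotation about the axis `ℝe₃`
(so `R^k = rot3 (kθ)`), `c > 0`, `c₀ = (0,0,c)`, and let `(v_k)_{k∈ℤ}` be vectors in
`ℝ²×{0}` with `v_{k+i} − v_k = R^k(v_i − v_0)` for all `k, i ∈ ℤ`.  For
`Λ = ⋃_{k∈ℤ} (R^k Γ + v_k + k c₀)` one has `R(Λ − Λ) = Λ − Λ`. -/
theorem scd_difference_set_rotation_invariant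
    (a b : ℝ × ℝ) (hab : LinearIndependent ℝ ![a, b])
    (θ c : ℝ) (hc : 0 < c)
    (v : ℤ → ℝ × ℝ × ℝ)
    (hv0 : ∀ k : ℤ, (v k).2.2 = 0)
    (hv : ∀ k i : ℤ, v (k + i) - v k = rot3 (k * θ) (v i - v 0))
    (Λ : Set (ℝ × ℝ × ℝ))
    (hΛ : Λ = {z | ∃ k m n : ℤ,
      z = rot3 (k * θ) (emb ((m : ℝ) • a + (n : ℝ) • b)) + v k + (k : ℝ) • ((0 : ℝ), (0 : ℝ), c)}) :
    rot3 θ '' {z | ∃ x ∈ Λ, ∃ y ∈ Λ, z = x - y}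
      = {z | ∃ x ∈ Λ, ∃ y ∈ Λ, z = x - y} := by
  rw [hΛ, ← scdSet_rot3Hom, ofPred_exists_eq_sub]
  exact scd_difference_set_rotation_invariant_general _ (rot3_axis θ c) fun i ↦ by
    simpa only [Int.cast_one, one_mul, rot3Hom_apply] using hv 1 i
end
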